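/- Let (ψ(q))_{q≥1} be a non-increasing sequence of positive real numbers such that ∑_{q=1}^{∞} ψ(q) diverges. Then for Lebesgue-almost every ω ∈ ℝ, there are infinitely many odd positive integers q for which there exists an integer p with gcd(p, q) = 1 and |q·ω − p| < ψ(q). -/

import Mathlib

open MeasureTheory

def GG (X : ℕ) : Finset (ℕ × ℕ) :=
  ((Finset.Icc 1 X) ×ˢ (Finset.Ioc X (4*X))).filter (fun x => Odd x.2 ∧ Nat.Coprime x.1 x.2)

lemma sum_inv_odd_sq (n : ℕ) : ∑ i ∈ Finset.range n, (1:ℝ)/(2*(i:ℝ)+3)^2 ≤ (1/4:ℝ) := by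
  have : ∑ i ∈ Finset.range n, (1:ℝ)/(2*(i:ℝ)+3)^2 ≤ (1/4:ℝ) - 1/(4*((n:ℝ)+1)) := by
    induction n with
    | zero => simp
    | succ n ih =>
      rw [Finset.sum_range_succ]
      have : (1:ℝ)/(2*n+3)^2 ≤ 1/(4*(n+1)) - 1/(4*((n+1:ℕ)+1)) := by
        push_cast
        rw [div_sub_div _ _ (by positivity) (by positivity), div_le_div_iff₀ (by positivity) (by positivity)]
        nlinarith
      linarith
  have h : (0:ℝ) ≤ 1/(4*(n+1)) := by positivity
  linarith

lemma GG_card_le (X : ℕ) : ((GG X).card : ℝ) ≤ 4 * (X:ℝ)^2 := by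
  have : (GG X).card ≤ X * (4*X - X) := by
    refine (Finset.card_filter_le _ _).trans ?_
    simp
  have h2 : X * (4*X - X) ≤ 4 * X^2 := by
    have : 4*X - X = 3 * X := by omega
    rw [this]; nlinarith
  exact_mod_cast this.trans h2

lemma GG_card_ge (m : ℕ) : ((2*m:ℕ):ℝ)^2/2 ≤ ((GG (2*m)).card : ℝ) := by
  set X := 2*m with hX
  let A := ((Finset.Icc 1 X) ×ˢ (Finset.Ioc X (4*X))).filter (fun x => Odd x.2)
  let M : ℕ → ℕ → Finset ℕ := fun Y d => (Finset.Ioc 0 Y).filter (fun x => d ∣ x)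
  let B := (Finset.range X).biUnion (fun i => M X (2*i+3) ×ˢ M (4*X) (2*i+3))
  have hsub : A ⊆ GG X ∪ B := by
    rintro ⟨p, q⟩ h
    simp only [A, Finset.mem_filter, Finset.mem_product, Finset.mem_Icc, Finset.mem_Ioc] at h
    obtain ⟨⟨⟨h1, h2⟩, h3, h4⟩, hodd⟩ := h
    rw [Finset.mem_union]
    by_cases hc : Nat.Coprime p q
    · left
      simp only [GG, Finset.mem_filter, Finset.mem_product, Finset.mem_Icc, Finset.mem_Ioc]
      exact ⟨⟨⟨h1, h2⟩, h3, h4⟩, hodd, hc⟩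
    · right
      have hd : Odd (Nat.gcd p q) := Odd.of_dvd_nat hodd (Nat.gcd_dvd_right p q)
      obtain ⟨i, hi⟩ := hd
      have hi0 : i ≠ 0 := by
        rintro rfl
        exact hc hi
      have hle : Nat.gcd p q ≤ p := Nat.gcd_le_left _ (by omega)
      simp only [B, M, Finset.mem_biUnion, Finset.mem_range, Finset.mem_product, Finset.mem_filter, Finset.mem_Ioc]
      refine ⟨i-1, by omega, ?_⟩
      have : 2*(i-1)+3 = Nat.gcd p q := by omega
      rw [this]
      exact ⟨⟨⟨by omega, h2⟩, Nat.gcd_dvd_left _ _⟩, ⟨by omega, h4⟩, Nat.gcd_dvd_right _ _⟩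
  have hA : X * (3*m) ≤ A.card := by
    have hinj : ((Finset.Icc 1 X) ×ˢ (Finset.range (3*m))).image (fun x => (x.1, X + 2*x.2+1)) ⊆ A := by
      intro y hy
      simp only [Finset.mem_image, Finset.mem_product, Finset.mem_Icc, Finset.mem_range, Prod.exists] at hy
      obtain ⟨a, b, ⟨⟨h1, h2⟩, h3⟩, rfl⟩ := hy
      simp only [A, Finset.mem_filter, Finset.mem_product, Finset.mem_Icc, Finset.mem_Ioc]
      refine ⟨⟨⟨h1, h2⟩, by omega, by omega⟩, ⟨m+b, by omega⟩⟩
    have := Finset.card_le_card hinj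
    rw [Finset.card_image_of_injective] at this
    · simpa using this
    · rintro ⟨a, b⟩ ⟨c, d⟩ h
      simp only [Prod.mk.injEq] at h ⊢
      omega
  have hB : (B.card : ℝ) ≤ (X:ℝ)^2 := by
    have h1 : B.card ≤ ∑ i ∈ Finset.range X, (X / (2*i+3)) * (4*X/(2*i+3)) := by
      refine Finset.card_biUnion_le.trans (Finset.sum_le_sum fun i _ => ?_)
      simp only [M, Finset.card_product, Nat.Ioc_filter_dvd_card_eq_div]
      exact le_rfl
    calc (B.card : ℝ) ≤ ((∑ i ∈ Finset.range X, (X / (2*i+3)) * (4*X/(2*i+3)) : ℕ) : ℝ) := by exact_mod_cast h1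
      _ ≤ ∑ i ∈ Finset.range X, 4*(X:ℝ)^2 * ((1:ℝ)/(2*i+3)^2) := by
        push_cast
        refine Finset.sum_le_sum fun i _ => ?_
        have a1 : ((X / (2*i+3) : ℕ):ℝ) ≤ (X:ℝ)/(2*i+3) := by
          have := @Nat.cast_div_le ℝ _ _ _ X (2*i+3)
          push_cast at this; exact this
        have a2 : ((4*X / (2*i+3) : ℕ):ℝ) ≤ (4*X:ℝ)/(2*i+3) := by
          have := @Nat.cast_div_le ℝ _ _ _ (4*X) (2*i+3)
          push_cast at this; exact this
        calc _ ≤ (X:ℝ)/(2*i+3) * ((4*X:ℝ)/(2*i+3)) := by gcongr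
          _ = _ := by field_simp
      _ ≤ 4*(X:ℝ)^2 * (1/4) := by
        rw [← Finset.mul_sum]
        gcongr
        exact sum_inv_odd_sq X
      _ = _ := by ring
  have hfin : A.card ≤ (GG X).card + B.card := (Finset.card_le_card hsub).trans (Finset.card_union_le _ _)
  have h1 : ((X * (3*m) : ℕ):ℝ) ≤ (GG X).card + B.card := by exact_mod_cast hA.trans hfin
  have h2 : (X:ℝ) = 2*m := by rw [hX]; push_cast; ring
  push_cast at h1
  nlinarith

/-- second moment lemma -/
lemma second_moment (μ : Measure ℝ) (E : ℕ → Set ℝ) (hE : ∀ k, MeasurableSet (E k))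
    (hfin : ∀ k, μ (E k) ≠ ⊤) (s : ℕ → ℝ) (I : Finset ℕ) (hS : 1 ≤ ∑ k ∈ I, s k)
    (h1 : ∀ k ∈ I, s k ≤ μ.real (E k)) (h2 : ∀ k ∈ I, μ.real (E k) ≤ 8 * s k)
    (h3 : ∀ k ∈ I, ∑ j ∈ I with j < k, μ.real (E j ∩ E k) ≤ s k * (16 + 256 * ∑ k ∈ I, s k)) :
    1/552 ≤ μ.real (⋃ k ∈ I, E k) := by
  set S := ∑ k ∈ I, s k with hSdef
  have key : ∀ t : ℝ, 0 ≤ t → 2*t*S - t^2 * (552 * S^2) ≤ μ.real (⋃ k ∈ I, E k) := by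
    intro t ht
    have hU : MeasurableSet (⋃ k ∈ I, E k) := Finset.measurableSet_biUnion _ (fun k _ => hE k)
    have hUfin : μ (⋃ k ∈ I, E k) ≠ ⊤ := by
      refine (lt_of_le_of_lt (measure_biUnion_finset_le _ _) ?_).ne
      exact ENNReal.sum_lt_top.2 (fun k _ => (hfin k).lt_top)
    let f : ℕ → ℝ → ℝ := fun k => (E k).indicator 1
    have hint : ∀ A : Set ℝ, MeasurableSet A → μ A ≠ ⊤ → Integrable (A.indicator (1 : ℝ → ℝ)) μ := by
      intro A hA hA'
      exact (integrable_indicator_iff hA).2 (integrableOn_const hA')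
    have hiI : ∀ j k, Integrable ((E j ∩ E k).indicator (1 : ℝ → ℝ)) μ := fun j k =>
      hint _ ((hE j).inter (hE k)) (measure_ne_top_of_subset Set.inter_subset_left (hfin j))
    have hpt : ∀ x, 2*t*(∑ k ∈ I, (E k).indicator (1 : ℝ → ℝ) x)
        - t^2 * (∑ k ∈ I, ∑ j ∈ I, (E j ∩ E k).indicator (1 : ℝ → ℝ) x)
        ≤ (⋃ k ∈ I, E k).indicator (1 : ℝ → ℝ) x := by
      intro x
      have hsq : (∑ k ∈ I, ∑ j ∈ I, (E j ∩ E k).indicator (1 : ℝ → ℝ) x)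
          = (∑ k ∈ I, (E k).indicator (1 : ℝ → ℝ) x)^2 := by
        rw [sq, Finset.sum_mul_sum]
        refine Finset.sum_congr rfl fun k _ => Finset.sum_congr rfl fun j _ => ?_
        rw [Set.inter_indicator_one]
        simp [mul_comm]
      rw [hsq]
      by_cases hx : x ∈ ⋃ k ∈ I, E k
      · rw [Set.indicator_of_mem hx]
        simp only [Pi.one_apply]
        nlinarith [sq_nonneg (1 - t * (∑ k ∈ I, (E k).indicator (1 : ℝ → ℝ) x))]
      · rw [Set.indicator_of_notMem hx]
        have : ∑ k ∈ I, (E k).indicator (1 : ℝ → ℝ) x = 0 := by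
          refine Finset.sum_eq_zero fun k hk => ?_
          refine Set.indicator_of_notMem (fun h => hx ?_) _
          simp only [Set.mem_iUnion]
          exact ⟨k, hk, h⟩
        rw [this]; simp
    have hmono := integral_mono (μ := μ)
      (((integrable_finsetSum I (fun k _ => hint _ (hE k) (hfin k))).const_mul (2*t)).sub
        ((integrable_finsetSum I (fun k _ => integrable_finsetSum I (fun j _ => hiI j k))).const_mul (t^2)))
      (hint _ hU hUfin) hpt
    rw [integral_sub', integral_const_mul, integral_const_mul, integral_finsetSum, integral_finsetSum,
      integral_indicator_one hU] at hmono
    rotate_left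
    · exact (fun k _ => integrable_finsetSum I (fun j _ => hiI j k))
    · exact (fun k _ => hint _ (hE k) (hfin k))
    · exact ((integrable_finsetSum I (fun k _ => hint _ (hE k) (hfin k))).const_mul (2*t))
    · exact ((integrable_finsetSum I (fun k _ => integrable_finsetSum I (fun j _ => hiI j k))).const_mul (t^2))
    have e1 : ∑ k ∈ I, ∫ a, (E k).indicator (1 : ℝ → ℝ) a ∂μ = ∑ k ∈ I, μ.real (E k) :=
      Finset.sum_congr rfl fun k _ => integral_indicator_one (hE k)
    have e2 : ∑ k ∈ I, ∫ a, ∑ j ∈ I, (E j ∩ E k).indicator (1 : ℝ → ℝ) a ∂μ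
        = ∑ k ∈ I, ∑ j ∈ I, μ.real (E j ∩ E k) := by
      refine Finset.sum_congr rfl fun k _ => ?_
      rw [integral_finsetSum _ (fun j _ => hiI j k)]
      exact Finset.sum_congr rfl fun j _ => integral_indicator_one ((hE j).inter (hE k))
    rw [e1, e2] at hmono
    have e3 : S ≤ ∑ k ∈ I, μ.real (E k) := Finset.sum_le_sum h1
    have e4 : ∑ k ∈ I, ∑ j ∈ I, μ.real (E j ∩ E k) ≤ 552 * S^2 := by
      have hs : ∑ k ∈ I, ∑ j ∈ I, μ.real (E j ∩ E k) =
          ∑ k ∈ I, (∑ j ∈ I with j < k, μ.real (E j ∩ E k)) +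
          ∑ k ∈ I, (∑ j ∈ I with j < k, μ.real (E j ∩ E k)) + ∑ k ∈ I, μ.real (E k) := by
        have hsw : ∑ k ∈ I, (∑ j ∈ I with j < k, μ.real (E j ∩ E k)) =
            ∑ k ∈ I, (∑ j ∈ I with k < j, μ.real (E j ∩ E k)) := by
          simp only [Finset.sum_filter]
          rw [Finset.sum_comm]
          refine Finset.sum_congr rfl fun k _ => Finset.sum_congr rfl fun j _ => ?_
          rw [Set.inter_comm]
        nth_rw 2 [hsw]
        rw [← Finset.sum_add_distrib, ← Finset.sum_add_distrib]
        refine Finset.sum_congr rfl fun k hk => ?_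
        have : μ.real (E k) = ∑ j ∈ I, if j = k then μ.real (E j ∩ E k) else 0 := by
          rw [Finset.sum_ite_eq' I k]; simp [hk]
        rw [this, Finset.sum_filter, Finset.sum_filter, ← Finset.sum_add_distrib, ← Finset.sum_add_distrib]
        refine Finset.sum_congr rfl fun j _ => ?_
        rcases lt_trichotomy j k with h | h | h
        · simp [h, h.not_gt, h.ne]
        · simp [h]
        · simp [h, h.not_gt, h.ne']
      have b1 := Finset.sum_le_sum h3
      rw [← Finset.sum_mul, ← hSdef] at b1
      have b2 := Finset.sum_le_sum h2
      rw [← Finset.mul_sum, ← hSdef] at b2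
      rw [hs]
      nlinarith
    have e5 : 2*t*S ≤ 2*t*∑ k ∈ I, μ.real (E k) := by gcongr
    have e6 : t^2 * ∑ k ∈ I, ∑ j ∈ I, μ.real (E j ∩ E k) ≤ t^2 * (552 * S^2) := by gcongr
    linarith
  have := key (1/(552*S)) (by positivity)
  refine le_trans (le_of_eq ?_) this
  field_simp
  ring

def EE (X : ℕ) (r : ℝ) : Set ℝ := ⋃ x ∈ GG X, Metric.ball ((x.1:ℝ)/x.2) r

lemma mem_GG {X : ℕ} {x : ℕ × ℕ} : x ∈ GG X ↔
    ((1 ≤ x.1 ∧ x.1 ≤ X) ∧ X < x.2 ∧ x.2 ≤ 4*X) ∧ Odd x.2 ∧ Nat.Coprime x.1 x.2 := by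
  simp only [GG, Finset.mem_filter, Finset.mem_product, Finset.mem_Icc, Finset.mem_Ioc]

lemma EE_meas (X : ℕ) (r : ℝ) : MeasurableSet (EE X r) :=
  Finset.measurableSet_biUnion _ (fun _ _ => measurableSet_ball)

lemma spacing {X : ℕ} {x y : ℕ × ℕ} (hx : x ∈ GG X) (hy : y ∈ GG X) (hxy : x ≠ y) :
    1/(16*(X:ℝ)^2) ≤ |(x.1:ℝ)/x.2 - (y.1:ℝ)/y.2| := by
  obtain ⟨p, q⟩ := x
  obtain ⟨a, b⟩ := y
  obtain ⟨⟨⟨h1, h2⟩, h3, h4⟩, -, hc⟩ := mem_GG.1 hx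
  obtain ⟨⟨⟨g1, g2⟩, g3, g4⟩, -, gc⟩ := mem_GG.1 hy
  dsimp only at *
  have hne : (p:ℤ)*b - q*a ≠ 0 := by
    intro h
    have h' : p*b = a*q := by zify; linarith
    have d1 : q ∣ b := hc.symm.dvd_of_dvd_mul_left (Dvd.intro_left a h'.symm)
    have d2 : b ∣ q := gc.symm.dvd_of_dvd_mul_left (Dvd.intro_left p h')
    have e := Nat.dvd_antisymm d1 d2
    subst e
    have : p = a := Nat.eq_of_mul_eq_mul_right (by omega) h'
    exact hxy (by rw [this])
  have h1' : (1:ℝ) ≤ |(p:ℝ)*b - q*a| := by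
    have := Int.one_le_abs hne
    exact_mod_cast this
  have hq : (0:ℝ) < q := by exact_mod_cast (by omega : 0 < q)
  have hb : (0:ℝ) < b := by exact_mod_cast (by omega : 0 < b)
  have hq4 : (q:ℝ) ≤ 4*X := by exact_mod_cast h4
  have hb4 : (b:ℝ) ≤ 4*X := by exact_mod_cast g4
  rw [div_sub_div _ _ hq.ne' hb.ne', abs_div, abs_of_pos (mul_pos hq hb)]
  have : (q:ℝ)*b ≤ 16*(X:ℝ)^2 := by
    calc (q:ℝ)*b ≤ (4*X)*(4*X) := by gcongr
      _ = _ := by ring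
  gcongr

lemma ball_disj {X : ℕ} {r : ℝ} (hr : r ≤ 1/(32*(X:ℝ)^2)) :
    (GG X : Set (ℕ × ℕ)).PairwiseDisjoint (fun x => Metric.ball ((x.1:ℝ)/x.2) r) := by
  intro x hx y hy hxy
  apply Metric.ball_disjoint_ball
  rw [Real.dist_eq]
  refine le_trans ?_ (spacing hx hy hxy)
  have : 1/(16*(X:ℝ)^2) = 1/(32*(X:ℝ)^2) + 1/(32*(X:ℝ)^2) := by
    by_cases h : (X:ℝ) = 0
    · simp [h]
    · field_simp; norm_num
  linarith

lemma vol_ball (x r : ℝ) (hr : 0 ≤ r) : volume.real (Metric.ball x r) = 2*r := by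
  rw [Measure.real, Real.volume_ball, ENNReal.toReal_ofReal (by linarith)]

lemma EE_vol {X : ℕ} {r : ℝ} (h0 : 0 ≤ r) (hr : r ≤ 1/(32*(X:ℝ)^2)) :
    volume.real (EE X r) = (GG X).card * (2*r) := by
  rw [EE, measureReal_biUnion_finset (ball_disj hr) (fun _ _ => measurableSet_ball)
    (fun x _ => measure_ball_lt_top.ne)]
  simp [vol_ball _ _ h0]

lemma EE_sub {X : ℕ} {r : ℝ} (hr : r ≤ 1) : EE X r ⊆ Metric.ball 0 2 := by
  intro z hz
  simp only [EE, Set.mem_iUnion] at hz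
  obtain ⟨x, hx, hz⟩ := hz
  obtain ⟨⟨⟨h1, h2⟩, h3, h4⟩, -, hc⟩ := mem_GG.1 hx
  rw [Metric.mem_ball, Real.dist_eq] at hz ⊢
  have hq : (0:ℝ) < x.2 := by exact_mod_cast (by omega : 0 < x.2)
  have : (x.1:ℝ)/x.2 ≤ 1 := by
    rw [div_le_one hq]; exact_mod_cast (by omega : x.1 ≤ x.2)
  have h0 : 0 ≤ (x.1:ℝ)/x.2 := by positivity
  rw [abs_lt] at hz ⊢
  constructor <;> linarith [hz.1, hz.2]

lemma count_near {X : ℕ} (hX : 0 < X) {r ρ : ℝ} (hr : r ≤ 1/(32*(X:ℝ)^2)) (hρ : 0 ≤ ρ) (h0 : 0 ≤ r) (g : ℝ) :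
    (((GG X).filter (fun x => |(x.1:ℝ)/x.2 - g| < ρ + r)).card : ℝ) ≤ 2 + 32*ρ*(X:ℝ)^2 := by
  set F := (GG X).filter (fun x => |(x.1:ℝ)/x.2 - g| < ρ + r)
  set δ : ℝ := 1/(32*(X:ℝ)^2) with hδ
  have hXp : (0:ℝ) < X := by exact_mod_cast hX
  have hδ0 : 0 < δ := by positivity
  have hv : volume.real (⋃ x ∈ F, Metric.ball ((x.1:ℝ)/x.2) δ) = F.card * (2*δ) := by
    rw [measureReal_biUnion_finset ((ball_disj hδ.le).subset (by
      intro x hx; exact (Finset.mem_filter.1 hx).1)) (fun _ _ => measurableSet_ball)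
      (fun x _ => measure_ball_lt_top.ne)]
    simp only [vol_ball _ _ hδ0.le, Finset.sum_const, nsmul_eq_mul]
  have hs : (⋃ x ∈ F, Metric.ball ((x.1:ℝ)/x.2) δ) ⊆ Metric.ball g (ρ + r + δ) := by
    intro z hz
    simp only [Set.mem_iUnion] at hz
    obtain ⟨x, hx, hz⟩ := hz
    have h2 := (Finset.mem_filter.1 hx).2
    rw [Metric.mem_ball] at hz ⊢
    rw [← Real.dist_eq] at h2
    have := dist_triangle z ((x.1:ℝ)/x.2) g
    linarith
  have hm := measureReal_mono hs (μ := volume) measure_ball_lt_top.ne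
  rw [hv, vol_ball _ _ (by positivity)] at hm
  have h3 : (F.card:ℝ) * (2*δ) ≤ 2*(ρ + δ + δ) := by linarith
  have h4 : (F.card:ℝ) * (2*δ) = F.card / (16*(X:ℝ)^2) := by rw [hδ]; field_simp; ring
  have h5 : 2*(ρ + δ + δ) = (2 + 32*ρ*(X:ℝ)^2)/ (16*(X:ℝ)^2) := by rw [hδ]; field_simp; ring
  rw [h4, h5] at h3
  exact (div_le_div_iff_of_pos_right (by positivity)).1 h3

lemma EE_inter {X Y : ℕ} (hY : 0 < Y) {r ρ : ℝ} (hr : r ≤ 1/(32*(Y:ℝ)^2)) (hρ : 0 ≤ ρ) (h0 : 0 ≤ r) :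
    volume.real (EE X ρ ∩ EE Y r) ≤ (GG X).card * ((2 + 32*ρ*(Y:ℝ)^2) * (2*r)) := by
  let F : ℕ × ℕ → Finset (ℕ × ℕ) := fun g =>
    (GG Y).filter (fun x => |(x.1:ℝ)/x.2 - (g.1:ℝ)/g.2| < ρ + r)
  have hs : EE X ρ ∩ EE Y r ⊆ ⋃ g ∈ GG X, ⋃ f ∈ F g, Metric.ball ((f.1:ℝ)/f.2) r := by
    rintro z ⟨hz1, hz2⟩
    simp only [EE, Set.mem_iUnion] at hz1 hz2
    obtain ⟨g, hg, hz1⟩ := hz1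
    obtain ⟨f, hf, hz2⟩ := hz2
    simp only [Set.mem_iUnion]
    refine ⟨g, hg, f, ?_, hz2⟩
    refine Finset.mem_filter.2 ⟨hf, ?_⟩
    rw [← Real.dist_eq]
    rw [Metric.mem_ball] at hz1 hz2
    have := dist_triangle_left ((f.1:ℝ)/f.2) ((g.1:ℝ)/g.2) z
    linarith
  have hfin : volume (⋃ g ∈ GG X, ⋃ f ∈ F g, Metric.ball ((f.1:ℝ)/f.2) r) ≠ ⊤ := by
    refine (lt_of_le_of_lt (measure_biUnion_finset_le _ _) (ENNReal.sum_lt_top.2 fun g _ => ?_)).ne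
    exact lt_of_le_of_lt (measure_biUnion_finset_le _ _) (ENNReal.sum_lt_top.2 fun f _ => measure_ball_lt_top)
  refine (measureReal_mono hs hfin).trans ?_
  refine (measureReal_biUnion_finset_le _ _).trans ?_
  rw [← nsmul_eq_mul]
  refine Finset.sum_le_card_nsmul _ _ _ fun g _ => ?_
  refine (measureReal_biUnion_finset_le _ _).trans ?_
  simp only [vol_ball _ _ h0, Finset.sum_const, nsmul_eq_mul]
  gcongr
  exact count_near hY hr hρ h0 _

lemma ae_lift {P : UnitAddCircle → Prop} (h : ∀ᵐ x : UnitAddCircle, P x) :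
    ∀ᵐ ω : ℝ, P (ω : UnitAddCircle) := by
  have h1 : ∀ n : ℤ, ∀ᵐ ω ∂(volume.restrict (Set.Ioc (n:ℝ) (n+1))), P ((ω:ℝ) : UnitAddCircle) := by
    intro n
    have := AddCircle.measurePreserving_mk 1 (n:ℝ)
    exact this.quasiMeasurePreserving.ae h
  have h2 := (ae_restrict_iUnion_iff (μ := volume) (fun n : ℤ => Set.Ioc (n:ℝ) (n+1)) (fun ω : ℝ => P (ω : UnitAddCircle))).2 h1
  rw [iUnion_Ioc_intCast, Measure.restrict_univ] at h2
  exact h2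

lemma not_summable_aux (ψ : ℕ → ℝ)
    (hpos : ∀ q, 1 ≤ q → 0 < ψ q)
    (hmono : ∀ q₁ q₂, 1 ≤ q₁ → q₁ ≤ q₂ → ψ q₂ ≤ ψ q₁)
    (hdiv : Filter.Tendsto (fun N => ∑ q ∈ Finset.Icc 1 N, ψ q)
      Filter.atTop Filter.atTop) :
    ¬ Summable (fun k : ℕ => min ((2:ℝ)^(k+3) * ψ (2^(k+3)) / 16) (1/32)) := by
  intro hs
  let f : ℕ → ℝ := fun n => if n = 0 then 0 else ψ n
  have hf0 : ∀ n, 0 ≤ f n := by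
    intro n
    by_cases h : n = 0
    · simp [f, h]
    · simpa [f, h] using (hpos n (by omega)).le
  have hfm : ∀ ⦃m n⦄, 0 < m → m ≤ n → f n ≤ f m := by
    intro m n hm hmn
    have h1 : n ≠ 0 := by omega
    simpa [f, h1, hm.ne'] using hmono m n hm hmn
  have hev : ∀ᶠ k : ℕ in Filter.atTop,
      ‖(2:ℝ)^(k+3) * f (2^(k+3)) / 16‖ ≤ min ((2:ℝ)^(k+3) * ψ (2^(k+3)) / 16) (1/32) := by
    have := hs.tendsto_atTop_zero.eventually (gt_mem_nhds (by norm_num : (0:ℝ) < 1/32))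
    filter_upwards [this] with k hk
    have hfe : f (2^(k+3)) = ψ (2^(k+3)) := by simp [f]
    have h2 : (0:ℝ) ≤ (2:ℝ)^(k+3) * f (2^(k+3)) / 16 := by
      have := hf0 (2^(k+3)); positivity
    rw [Real.norm_of_nonneg h2, hfe]
    rcases min_lt_iff.1 hk with h | h
    · exact le_min le_rfl h.le
    · exact absurd h (lt_irrefl _)
  have h1 := Summable.of_norm_bounded_eventually_nat hs hev
  have h2 : Summable (fun k : ℕ => (2:ℝ)^(k+3) * f (2^(k+3))) := by
    have := h1.mul_left 16
    refine this.congr fun k => ?_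
    ring
  have h3 : Summable (fun k : ℕ => (2:ℝ)^k * f (2^k)) :=
    (summable_nat_add_iff (f := fun k : ℕ => (2:ℝ)^k * f (2^k)) 3).1 h2
  have h4 := (summable_condensed_iff_of_nonneg hf0 hfm).1 h3
  obtain ⟨N, hN⟩ := (hdiv.eventually (Filter.eventually_gt_atTop (∑' n, f n))).exists
  have h5 : ∑ q ∈ Finset.Icc 1 N, ψ q = ∑ q ∈ Finset.Icc 1 N, f q := by
    refine Finset.sum_congr rfl fun q hq => ?_
    have : q ≠ 0 := by have := (Finset.mem_Icc.1 hq).1; omega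
    simp [f, this]
  have h6 := h4.sum_le_tsum (Finset.Icc 1 N) (fun n _ => hf0 n)
  rw [h5] at hN
  linarith

lemma sum_sq_le (k : ℕ) : ∑ j ∈ Finset.range k, (((2*2^j : ℕ)):ℝ)^2 ≤ (((2*2^k : ℕ)):ℝ)^2 := by
  induction k with
  | zero => simp
  | succ k ih =>
    rw [Finset.sum_range_succ]
    push_cast at ih ⊢
    rw [pow_succ (2:ℝ) k]
    nlinarith [sq_nonneg ((2:ℝ)^k)]

lemma limsup_pos (ψ : ℕ → ℝ)
    (hpos : ∀ q, 1 ≤ q → 0 < ψ q)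
    (hmono : ∀ q₁ q₂, 1 ≤ q₁ → q₁ ≤ q₂ → ψ q₂ ≤ ψ q₁)
    (hdiv : Filter.Tendsto (fun N => ∑ q ∈ Finset.Icc 1 N, ψ q)
      Filter.atTop Filter.atTop) :
    ∃ (r : ℕ → ℝ), (∀ k, r k ≤ ψ (4*(2*2^k)) / ((4*(2*2^k) : ℕ):ℝ)) ∧
      volume (⋂ m : ℕ, ⋃ k ∈ Set.Ici m, EE (2*2^k) (r k)) ≠ 0 := by
  let X : ℕ → ℕ := fun k => 2*2^k
  have hX : ∀ k, 0 < X k := fun k => by positivity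
  have hXr : ∀ k, (0:ℝ) < X k := fun k => by exact_mod_cast hX k
  have hX1 : ∀ k, (1:ℝ) ≤ X k := fun k => by exact_mod_cast hX k
  let r : ℕ → ℝ := fun k => min (ψ (4*(X k)) / ((4*(X k) : ℕ):ℝ)) (1/(32*(X k:ℝ)^2))
  have hr0 : ∀ k, 0 ≤ r k := by
    intro k
    have h1 := hpos (4*X k) (by have := hX k; omega)
    have := hXr k
    exact le_min (by positivity) (by positivity)
  have hr2 : ∀ k, r k ≤ 1/(32*(X k:ℝ)^2) := fun k => min_le_right _ _
  have hr1 : ∀ k, r k ≤ 1 := by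
    intro k
    refine (hr2 k).trans ?_
    rw [div_le_one (by have := hXr k; positivity)]
    nlinarith [hX1 k]
  refine ⟨r, fun k => min_le_left _ _, ?_⟩
  let s : ℕ → ℝ := fun k => (X k:ℝ)^2 * r k
  have hs0 : ∀ k, 0 ≤ s k := fun k => mul_nonneg (sq_nonneg _) (hr0 k)
  have hsns : ¬ Summable s := by
    have : s = (fun k : ℕ => min ((2:ℝ)^(k+3) * ψ (2^(k+3)) / 16) (1/32)) := by
      funext k
      have hx := hXr k
      have e : 4 * X k = 2^(k+3) := by simp only [X]; ring
      have e' : (2:ℝ)^(k+3) = 4 * X k := by exact_mod_cast e.symm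
      simp only [s, r]
      rw [mul_min_of_nonneg _ _ (sq_nonneg _), e']
      congr 1
      · rw [e]; push_cast; rw [e']; field_simp; norm_num
      · field_simp
    rw [this]
    exact not_summable_aux ψ hpos hmono hdiv
  have htop := (not_summable_iff_tendsto_nat_atTop_of_nonneg hs0).1 hsns
  let E : ℕ → Set ℝ := fun k => EE (X k) (r k)
  have hE : ∀ k, MeasurableSet (E k) := fun k => EE_meas _ _
  have hEs : ∀ k, E k ⊆ Metric.ball 0 2 := fun k => EE_sub (hr1 k)
  have hEf : ∀ k, volume (E k) ≠ ⊤ := fun k => measure_ne_top_of_subset (hEs k) measure_ball_lt_top.ne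
  have hUs : ∀ m : ℕ, (⋃ k ∈ Set.Ici m, E k) ⊆ Metric.ball 0 2 := fun m =>
    Set.iUnion₂_subset fun k _ => hEs k
  have hUf : ∀ m : ℕ, volume (⋃ k ∈ Set.Ici m, E k) ≠ ⊤ := fun m =>
    measure_ne_top_of_subset (hUs m) measure_ball_lt_top.ne
  have hbig : ∀ m : ℕ, ENNReal.ofReal (1/552) ≤ volume (⋃ k ∈ Set.Ici m, E k) := by
    intro m
    obtain ⟨n, hn, hmn⟩ := ((htop.eventually (Filter.eventually_ge_atTop
      (1 + ∑ k ∈ Finset.range m, s k))).and (Filter.eventually_ge_atTop m)).exists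
    have hS : 1 ≤ ∑ k ∈ Finset.Ico m n, s k := by
      rw [Finset.sum_Ico_eq_sub _ hmn]; linarith
    have := second_moment volume E hE hEf s (Finset.Ico m n) hS ?_ ?_ ?_
    · have h2 : volume.real (⋃ k ∈ Finset.Ico m n, E k) ≤ volume.real (⋃ k ∈ Set.Ici m, E k) := by
        refine measureReal_mono ?_ (hUf m)
        refine Set.iUnion₂_subset fun k hk => ?_
        exact Set.subset_biUnion_of_mem (u := E) (Set.mem_Ici.2 (Finset.mem_Ico.1 hk).1)
      rw [ENNReal.ofReal_le_iff_le_toReal (hUf m)]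
      exact this.trans h2
    · intro k _
      rw [EE_vol (hr0 k) (hr2 k)]
      have := GG_card_ge (2^k)
      have h0 := hr0 k
      calc s k = (X k:ℝ)^2/2 * (2 * r k) := by simp only [s]; ring
        _ ≤ _ := by gcongr
    · intro k _
      rw [EE_vol (hr0 k) (hr2 k)]
      have := GG_card_le (X k)
      have h0 := hr0 k
      calc _ ≤ (4 * (X k:ℝ)^2) * (2 * r k) := by gcongr
        _ = 8 * s k := by simp only [s]; ring
    · intro k _
      set S := ∑ k ∈ Finset.Ico m n, s k
      have hk0 := hr0 k
      have h1 : ∀ j ∈ (Finset.Ico m n).filter (fun j => j < k), volume.real (E j ∩ E k) ≤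
          (16 * r k) * (X j:ℝ)^2 + (256 * s k) * s j := by
        intro j _
        refine (EE_inter (X := X j) (hX k) (hr2 k) (hr0 j) (hr0 k)).trans ?_
        have := GG_card_le (X j)
        have h0 := hr0 j
        calc _ ≤ (4 * (X j:ℝ)^2) * ((2 + 32*r j*(X k:ℝ)^2) * (2*r k)) := by gcongr
          _ = _ := by simp only [s]; ring
      refine (Finset.sum_le_sum h1).trans ?_
      rw [Finset.sum_add_distrib, ← Finset.mul_sum, ← Finset.mul_sum]
      have h2 : ∑ j ∈ (Finset.Ico m n).filter (fun j => j < k), (X j:ℝ)^2 ≤ (X k:ℝ)^2 := by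
        refine le_trans (Finset.sum_le_sum_of_subset_of_nonneg (t := Finset.range k) ?_ ?_) (sum_sq_le k)
        · intro j hj; exact Finset.mem_range.2 (Finset.mem_filter.1 hj).2
        · intro j _ _; positivity
      have h3 : ∑ j ∈ (Finset.Ico m n).filter (fun j => j < k), s j ≤ S :=
        Finset.sum_le_sum_of_subset_of_nonneg (Finset.filter_subset _ _) (fun j _ _ => hs0 j)
      have hsk := hs0 k
      calc _ ≤ 16 * r k * (X k:ℝ)^2 + 256 * s k * S := by gcongr
        _ = _ := by simp only [s]; ring
  have hlim := tendsto_measure_iInter_atTop (μ := (volume : Measure ℝ))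
    (s := fun m : ℕ => ⋃ k ∈ Set.Ici m, E k)
    (fun m => (MeasurableSet.biUnion (Set.to_countable _) (fun k _ => hE k)).nullMeasurableSet)
    (fun a b hab => Set.biUnion_subset_biUnion_left (Set.Ici_subset_Ici.2 hab)) ⟨0, hUf 0⟩
  have := ge_of_tendsto' hlim hbig
  intro h0
  have h0' : volume (⋂ m : ℕ, ⋃ k ∈ Set.Ici m, E k) = 0 := h0
  rw [h0'] at this
  norm_num at this



/-- Khinchin-type theorem with odd denominators: if `ψ` is positive, non-increasing and
`∑ ψ(q)` diverges, then for Lebesgue a.e. `ω` there are infinitely many odd `q ≥ 1`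
admitting an integer `p` coprime to `q` with `|qω - p| < ψ(q)`. -/
theorem stmt_16 (ψ : ℕ → ℝ)
    (hpos : ∀ q, 1 ≤ q → 0 < ψ q)
    (hmono : ∀ q₁ q₂, 1 ≤ q₁ → q₁ ≤ q₂ → ψ q₂ ≤ ψ q₁)
    (hdiv : Filter.Tendsto (fun N => ∑ q ∈ Finset.Icc 1 N, ψ q)
      Filter.atTop Filter.atTop) :
    ∀ᵐ ω ∂(volume : Measure ℝ),
      {q : ℕ | 1 ≤ q ∧ Odd q ∧ ∃ p : ℤ, Int.gcd p (q : ℤ) = 1 ∧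
        |(q : ℝ) * ω - (p : ℝ)| < ψ q}.Infinite := by
  let δ : ℕ → ℝ := fun q => if Odd q then ψ q / q else 0
  have hδ : Filter.Tendsto δ Filter.atTop (nhds 0) := by
    have h1 : Filter.Tendsto (fun q : ℕ => ψ 1 / (q:ℝ)) Filter.atTop (nhds 0) :=
      tendsto_const_div_atTop_nhds_zero_nat _
    refine squeeze_zero' ?_ ?_ h1
    · filter_upwards [Filter.eventually_ge_atTop 1] with q hq
      simp only [δ]
      split_ifs
      · have := hpos q hq; positivity
      · exact le_rfl
    · filter_upwards [Filter.eventually_ge_atTop 1] with q hq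
      have h2 := hpos 1 le_rfl
      simp only [δ]
      split_ifs
      · have := hmono 1 q le_rfl hq; gcongr
      · positivity
  rcases AddCircle.addWellApproximable_ae_empty_or_univ (T := 1) δ hδ with h | h
  · exfalso
    have h' := ae_lift h
    obtain ⟨r, hr, hL⟩ := limsup_pos ψ hpos hmono hdiv
    apply hL
    refine measure_mono_null (t := {ω : ℝ | ¬ (¬ ((ω : UnitAddCircle) ∈ addWellApproximable UnitAddCircle δ))}) ?_ (ae_iff.1 h')
    intro ω hω
    simp only [Set.mem_ofPred_eq, not_not]
    rw [UnitAddCircle.mem_addWellApproximable_iff]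
    rw [Set.infinite_iff_exists_gt]
    intro N
    have h1 := Set.mem_iInter.1 hω N
    simp only [Set.mem_iUnion, EE] at h1
    obtain ⟨k, hk, ⟨p, q⟩, hpq, hb⟩ := h1
    obtain ⟨⟨⟨h1, h2⟩, h3, h4⟩, hodd, hc⟩ := mem_GG.1 hpq
    dsimp only at *
    have hk' : N ≤ k := hk
    have hk2 : k < 2^k := Nat.lt_two_pow_self
    refine ⟨q, ⟨p, by omega, hc, ?_⟩, by omega⟩
    rw [← AddCircle.coe_sub]
    rw [Metric.mem_ball, Real.dist_eq] at hb
    have hq0 : (0:ℝ) < q := by exact_mod_cast (by omega : 0 < q)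
    have h5 := hpos q (by omega)
    calc ‖((ω - (p:ℝ)/q : ℝ) : UnitAddCircle)‖ ≤ |ω - (p:ℝ)/q| := by
          rw [UnitAddCircle.norm_eq]; simpa using round_le (ω - (p:ℝ)/q) 0
      _ < r k := hb
      _ ≤ ψ (4*(2*2^k)) / ((4*(2*2^k) : ℕ):ℝ) := hr k
      _ ≤ ψ q / q := by
          have h6 := hmono q (4*(2*2^k)) (by omega) h4
          have h7 : (q:ℝ) ≤ ((4*(2*2^k) : ℕ):ℝ) := by exact_mod_cast h4
          gcongr
      _ = δ q := by simp only [δ]; rw [if_pos hodd]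
  · filter_upwards [ae_lift h] with ω hω
    rw [UnitAddCircle.mem_addWellApproximable_iff] at hω
    refine hω.mono ?_
    rintro n ⟨m, hm, hg, hlt⟩
    by_cases hodd : Odd n
    · refine ⟨by omega, hodd, m + n * round (ω - (m:ℝ)/n), ?_, ?_⟩
      · have : Int.gcd (m:ℤ) n = 1 := hg
        rw [← this]
        simp
      · rw [← AddCircle.coe_sub, UnitAddCircle.norm_eq] at hlt
        simp only [δ] at hlt
        rw [if_pos hodd] at hlt
        have hn : (0:ℝ) < n := by exact_mod_cast (by omega : 0 < n)
        rw [lt_div_iff₀ hn] at hlt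
        refine lt_of_eq_of_lt ?_ hlt
        push_cast
        rw [← abs_of_pos hn, ← abs_mul, abs_of_pos hn]
        congr 1
        field_simp
        ring
    · exfalso
      simp only [δ] at hlt
      rw [if_neg hodd] at hlt
      exact absurd hlt (norm_nonneg _).not_gt
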